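/- Let the system satisfy the uniform observability assumption with horizon N, and suppose there is a row vector α ∈ ℝ^{1×S} such that h̃(w, ξ) = α Z(w, ξ) for every ξ ∈ 𝒰^N and every w ∈ Φ_N(𝒳, (ξ₁,…,ξ_{N−1})). Let (x(k), u(k), y(k)), k = 0, …, N+T−1, be a trajectory of the system such that for every i = 0, …, T−1: x(i) ∈ 𝒳 and U(i) := (u(i), …, u(i+N−1)) ∈ 𝒰^N. Define Y(i) := (y(i), …, y(i+N−1)) and Q(i) := Q(Y(i), U(i)). Then for each i = 0, …, T−1, [Y(i+1); U(i+1)] = A [Y(i); U(i)] + B₁ u(i+N) + B₂ α [Y(i); U(i); Q(i)]; equivalently, the matrices Y₀ = [Y(0) ⋯ Y(T−1)], V₀ = [U(0) ⋯ U(T−1)], Y₁ = [Y(1) ⋯ Y(T)], V₁ = [U(1) ⋯ U(T)], Q₀ = [Q(0) ⋯ Q(T−1)], U₀ = [u(N) ⋯ u(N+T−1)] satisfy [Y₁; V₁] = A [Y₀; V₀] + B₁ U₀ + B₂ α [Y₀; V₀; Q₀]. -/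

import Mathlib

/-!
Along a trajectory the `k`-fold iterate `F^k(x(i), u(i), …, u(i+k-1))` is the state `x(i+k)`.
Hence `Y(i) = Φ_N(x(i), u(i), …, u(i+N-2))`, the left inverse `Ψ_N` recovers `x(i)` from it, and
`y(i+N) = h(F^N(x(i), U(i))) = h̃(Y(i), U(i)) = α Z(Y(i), U(i))` (`output_eq_dictionary`).
The window `Y(i+1)` is the Brunovsky shift of `Y(i)` with the new last entry `y(i+N)`, and likewise
`U(i+1)` is that of `U(i)` with `u(i+N)` (`brunovsky_window`); this is the identity for each `i`.
The matrix identity is the same statement read off column by column.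
-/

open Matrix Filter Topology

noncomputable section

/-- Iterated composition of the dynamics: `Fiter f k x v = F^k(x, v₀, …, v_{k-1})`. -/
def Fiter {n : ℕ} (f : (Fin n → ℝ) → ℝ → (Fin n → ℝ)) :
    (k : ℕ) → (Fin n → ℝ) → (Fin k → ℝ) → (Fin n → ℝ)
  | 0, x, _ => x
  | k + 1, x, v => f (Fiter f k x (fun j => v j.castSucc)) (v (Fin.last k))

/-- The observability map `Φ_N(x, v₀, …, v_{N-2})`. -/
def Phi {n : ℕ} (f : (Fin n → ℝ) → ℝ → (Fin n → ℝ)) (h : (Fin n → ℝ) → ℝ)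
    (N : ℕ) (x : Fin n → ℝ) (v : Fin (N - 1) → ℝ) : Fin N → ℝ :=
  fun i => h (Fiter f i.val x (fun j => v ⟨j.val, by
    have h1 := j.isLt; have h2 := i.isLt; omega⟩))

/-- First `N-1` entries of a vector in `ℝ^N`. -/
def trunc {N : ℕ} {α : Type*} (v : Fin N → α) : Fin (N - 1) → α :=
  fun i => v ⟨i.val, by have := i.isLt; omega⟩

/-- `ψ(w, v) = F^N(Ψ_N(w, v_{[0,N-2]}), v)`. -/
def psiMap {n N : ℕ} (f : (Fin n → ℝ) → ℝ → (Fin n → ℝ))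
    (Psi : (Fin N → ℝ) → (Fin (N - 1) → ℝ) → (Fin n → ℝ))
    (w v : Fin N → ℝ) : Fin n → ℝ :=
  Fiter f N (Psi w (trunc v)) v

/-- `h̃(w, v) = h(ψ(w, v))`. -/
def htil {n N : ℕ} (f : (Fin n → ℝ) → ℝ → (Fin n → ℝ)) (h : (Fin n → ℝ) → ℝ)
    (Psi : (Fin N → ℝ) → (Fin (N - 1) → ℝ) → (Fin n → ℝ))
    (w v : Fin N → ℝ) : ℝ :=
  h (psiMap f Psi w v)

/-- Brunovsky shift: `A_c w + B_c s = (w₂, …, w_N, s)`. -/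
def brun {N : ℕ} (w : Fin N → ℝ) (s : ℝ) : Fin N → ℝ :=
  fun i => if h : i.val + 1 < N then w ⟨i.val + 1, h⟩ else s

/-- `f̃(w, v) = A_c w + B_c h̃(w, v)`. -/
def ftil {n N : ℕ} (f : (Fin n → ℝ) → ℝ → (Fin n → ℝ)) (h : (Fin n → ℝ) → ℝ)
    (Psi : (Fin N → ℝ) → (Fin (N - 1) → ℝ) → (Fin n → ℝ))
    (w v : Fin N → ℝ) : Fin N → ℝ :=
  brun w (htil f h Psi w v)

/-- Brunovsky matrix `A_c`. -/
def Ac (N : ℕ) : Matrix (Fin N) (Fin N) ℝ :=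
  Matrix.of fun i j => if i.val + 1 = j.val then 1 else 0

/-- Brunovsky vector `B_c`. -/
def Bc (N : ℕ) : Fin N → ℝ := fun i => if i.val = N - 1 then 1 else 0

/-- `A = blkdiag(A_c, A_c)`. -/
def Ablk (N : ℕ) : Matrix (Fin N ⊕ Fin N) (Fin N ⊕ Fin N) ℝ :=
  Matrix.fromBlocks (Ac N) 0 0 (Ac N)

/-- `B₁ = (0; B_c)`. -/
def B1 (N : ℕ) : (Fin N ⊕ Fin N) → ℝ := Sum.elim 0 (Bc N)

/-- `B₂ = (B_c; 0)`. -/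
def B2 (N : ℕ) : (Fin N ⊕ Fin N) → ℝ := Sum.elim (Bc N) 0

/-- Stacked matrix `[Y; V; Q]`. -/
def stack3 {N P T : ℕ} (Y V : Matrix (Fin N) (Fin T) ℝ) (Q : Matrix (Fin P) (Fin T) ℝ) :
    Matrix (Fin N ⊕ (Fin N ⊕ Fin P)) (Fin T) ℝ :=
  Matrix.fromRows Y (Matrix.fromRows V Q)

/-- Stacked matrix `[Y; V]`. -/
def stack2 {N T : ℕ} (Y V : Matrix (Fin N) (Fin T) ℝ) :
    Matrix (Fin N ⊕ Fin N) (Fin T) ℝ := Matrix.fromRows Y V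

/-- The dictionary vector `Z(w, ξ) = (w, ξ, Q(w, ξ))`. -/
def Zvec {N P : ℕ} (Q : (Fin N → ℝ) → (Fin N → ℝ) → (Fin P → ℝ)) (w ξ : Fin N → ℝ) :
    (Fin N ⊕ (Fin N ⊕ Fin P)) → ℝ :=
  Sum.elim w (Sum.elim ξ (Q w ξ))

/-- Concatenation of columns `[G₁ G₂]` (with the `S = N + (N + P)` index grouping). -/
def glue {T N P : ℕ} (G₁ : Matrix (Fin T) (Fin N ⊕ Fin N) ℝ) (G₂ : Matrix (Fin T) (Fin P) ℝ) :
    Matrix (Fin T) (Fin N ⊕ (Fin N ⊕ Fin P)) ℝ :=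
  Matrix.of fun t =>
    Sum.elim (fun a => G₁ t (Sum.inl a)) (Sum.elim (fun b => G₁ t (Sum.inr b)) (fun q => G₂ t q))

/-- Euclidean norm on a finite-dimensional coordinate space. -/
def enorm {ι : Type*} [Fintype ι] (z : ι → ℝ) : ℝ := Real.sqrt (∑ i, z i ^ 2)


theorem Fiter_trajectory {n : ℕ} (f : (Fin n → ℝ) → ℝ → (Fin n → ℝ))
    (x : ℕ → (Fin n → ℝ)) (u : ℕ → ℝ) (M i : ℕ)
    (hdyn : ∀ k : ℕ, k + 1 < M → x (k + 1) = f (x k) (u k)) :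
    ∀ k : ℕ, i + k < M → Fiter f k (x i) (fun j : Fin k => u (i + j.val)) = x (i + k)
  | 0, _ => rfl
  | k + 1, hk => by
    have ih := Fiter_trajectory f x u M i hdyn k (by omega)
    rw [← add_assoc, hdyn (i + k) (by omega), ← ih]
    rfl

/-- The Brunovsky pair acts as the left shift that appends its input. -/
theorem Ac_mulVec_add_smul_Bc {N : ℕ} (w : Fin N → ℝ) (s : ℝ) :
    Ac N *ᵥ w + s • Bc N = brun w s := by
  funext j
  have hj := j.isLt
  simp only [Pi.add_apply, Pi.smul_apply, smul_eq_mul, Matrix.mulVec, dotProduct, Ac, Bc, brun,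
    Matrix.of_apply, ite_mul, one_mul, zero_mul]
  by_cases hlt : j.val + 1 < N
  · rw [dif_pos hlt, if_neg (by omega), mul_zero, add_zero,
      Finset.sum_eq_single (⟨j.val + 1, hlt⟩ : Fin N)]
    · simp
    · intro b _ hb
      exact if_neg fun e => hb (Fin.ext e.symm)
    · simp
  · rw [dif_neg hlt, if_pos (by omega), mul_one, Finset.sum_eq_zero, zero_add]
    intro b _
    exact if_neg (by have := b.isLt; omega)

theorem brunovsky_window {N : ℕ} (z : ℕ → ℝ) (i : ℕ) :
    (fun j : Fin N => z (i + 1 + j.val)) =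
      Ac N *ᵥ (fun j : Fin N => z (i + j.val)) + z (i + N) • Bc N := by
  rw [Ac_mulVec_add_smul_Bc]
  funext j
  have hj := j.isLt
  unfold brun
  split_ifs with hlt
  · exact congrArg z (by simp only; omega)
  · exact congrArg z (by omega)

/-- The output following the window `(Y(i), U(i))` is the value there of the dictionary
expansion of `h̃`. -/
theorem output_eq_dictionary {n N P M : ℕ}
    (f : (Fin n → ℝ) → ℝ → (Fin n → ℝ)) (h : (Fin n → ℝ) → ℝ)
    (X : Set (Fin n → ℝ)) (U : Set ℝ)
    (Psi : (Fin N → ℝ) → (Fin (N - 1) → ℝ) → (Fin n → ℝ))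
    (hPsi : ∀ v : Fin (N - 1) → ℝ, (∀ i, v i ∈ U) →
      ∀ x ∈ X, Psi (Phi f h N x v) v = x)
    (Q : (Fin N → ℝ) → (Fin N → ℝ) → (Fin P → ℝ))
    (α : (Fin N ⊕ (Fin N ⊕ Fin P)) → ℝ)
    (hαZ : ∀ ξv : Fin N → ℝ, (∀ i, ξv i ∈ U) → ∀ x ∈ X,
      htil f h Psi (Phi f h N x (trunc ξv)) ξv = α ⬝ᵥ Zvec Q (Phi f h N x (trunc ξv)) ξv)
    (x : ℕ → (Fin n → ℝ)) (u y : ℕ → ℝ)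
    (hdyn : ∀ k : ℕ, k + 1 < M → x (k + 1) = f (x k) (u k))
    (hout : ∀ k : ℕ, k < M → y k = h (x k))
    (i : ℕ) (hi : i + N < M) (hx : x i ∈ X) (hu : ∀ j : Fin N, u (i + j.val) ∈ U) :
    y (i + N) =
      α ⬝ᵥ Zvec Q (fun j : Fin N => y (i + j.val)) (fun j : Fin N => u (i + j.val)) := by
  have hY : Phi f h N (x i) (trunc fun j : Fin N => u (i + j.val)) =
      fun j : Fin N => y (i + j.val) := by
    funext j
    have hj := j.isLt
    rw [hout (i + j.val) (by omega),
      ← Fiter_trajectory f x u M i hdyn j.val (by omega)]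
    rfl
  have hα := hαZ (fun j : Fin N => u (i + j.val)) hu (x i) hx
  rw [htil, psiMap, hPsi (trunc fun j : Fin N => u (i + j.val)) (fun _ => hu _) _ hx, hY,
    Fiter_trajectory f x u M i hdyn N hi] at hα
  rw [hout _ hi, hα]

/-- the data matrices built from a trajectory of the system satisfy the
identity `[Y₁; V₁] = A [Y₀; V₀] + B₁ U₀ + B₂ α [Y₀; V₀; Q₀]`. -/
theorem stmt_11 {n N T P : ℕ} (hN : 0 < N) (hP : 0 < P) (hT : 0 < T)
    (f : (Fin n → ℝ) → ℝ → (Fin n → ℝ)) (h : (Fin n → ℝ) → ℝ)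
    (hf : Continuous fun pr : (Fin n → ℝ) × ℝ => f pr.1 pr.2) (hh : Continuous h)
    (hf0 : f 0 0 = 0) (hh0 : h 0 = 0)
    (X : Set (Fin n → ℝ)) (U : Set ℝ)
    (hXc : IsCompact X) (hUc : IsCompact U)
    (hX0 : (0 : Fin n → ℝ) ∈ X) (hU0 : (0 : ℝ) ∈ U)
    (hobs : ∀ v : Fin (N - 1) → ℝ, (∀ i, v i ∈ U) →
      Set.InjOn (fun x => Phi f h N x v) X)
    (Psi : (Fin N → ℝ) → (Fin (N - 1) → ℝ) → (Fin n → ℝ))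
    (hPsi : ∀ v : Fin (N - 1) → ℝ, (∀ i, v i ∈ U) →
      ∀ x ∈ X, Psi (Phi f h N x v) v = x)
    -- the dictionary: h̃(w, ξ) = α Z(w, ξ) on the relevant domain
    (Q : (Fin N → ℝ) → (Fin N → ℝ) → (Fin P → ℝ))
    (hQcont : Continuous fun pr : (Fin N → ℝ) × (Fin N → ℝ) => Q pr.1 pr.2)
    (α : (Fin N ⊕ (Fin N ⊕ Fin P)) → ℝ)
    (hαZ : ∀ ξv : Fin N → ℝ, (∀ i, ξv i ∈ U) → ∀ x ∈ X,
      htil f h Psi (Phi f h N x (trunc ξv)) ξv = α ⬝ᵥ Zvec Q (Phi f h N x (trunc ξv)) ξv)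
    -- a trajectory of the system on k = 0, …, N+T-1
    (x : ℕ → (Fin n → ℝ)) (u y : ℕ → ℝ)
    (hdyn : ∀ k : ℕ, k + 1 < N + T → x (k + 1) = f (x k) (u k))
    (hout : ∀ k : ℕ, k < N + T → y k = h (x k))
    (hmem : ∀ i < T, x i ∈ X ∧ ∀ j : Fin N, u (i + j.val) ∈ U) :
    -- the identity for each i = 0, …, T-1
    (∀ i < T,
      Sum.elim (fun j : Fin N => y (i + 1 + j.val)) (fun j : Fin N => u (i + 1 + j.val)) =
      Ablk N *ᵥ Sum.elim (fun j : Fin N => y (i + j.val)) (fun j : Fin N => u (i + j.val))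
        + u (i + N) • B1 N
        + (α ⬝ᵥ Zvec Q (fun j : Fin N => y (i + j.val)) (fun j : Fin N => u (i + j.val))) • B2 N)
    ∧
    -- equivalently, in matrix form
    stack2 (Matrix.of fun (j : Fin N) (i : Fin T) => y (i.val + 1 + j.val))
           (Matrix.of fun (j : Fin N) (i : Fin T) => u (i.val + 1 + j.val)) =
      Ablk N * stack2 (Matrix.of fun (j : Fin N) (i : Fin T) => y (i.val + j.val))
                      (Matrix.of fun (j : Fin N) (i : Fin T) => u (i.val + j.val))
      + Matrix.vecMulVec (B1 N) (fun i : Fin T => u (i.val + N))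
      + Matrix.vecMulVec (B2 N) (Matrix.vecMul α
          (stack3 (Matrix.of fun (j : Fin N) (i : Fin T) => y (i.val + j.val))
                  (Matrix.of fun (j : Fin N) (i : Fin T) => u (i.val + j.val))
                  (Matrix.of fun (q : Fin P) (i : Fin T) =>
                    Q (fun j : Fin N => y (i.val + j.val)) (fun j : Fin N => u (i.val + j.val)) q))) := by
  have key : ∀ i < T,
      Sum.elim (fun j : Fin N => y (i + 1 + j.val)) (fun j : Fin N => u (i + 1 + j.val)) =
      Ablk N *ᵥ Sum.elim (fun j : Fin N => y (i + j.val)) (fun j : Fin N => u (i + j.val))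
        + u (i + N) • B1 N
        + (α ⬝ᵥ Zvec Q (fun j : Fin N => y (i + j.val)) (fun j : Fin N => u (i + j.val))) •
            B2 N := by
    intro i hi
    rw [← output_eq_dictionary f h X U Psi hPsi Q α hαZ x u y hdyn hout i (by omega)
        (hmem i hi).1 (hmem i hi).2,
      brunovsky_window y i, brunovsky_window u i, Ablk, Matrix.fromBlocks_mulVec]
    funext j
    rcases j with j | j <;> simp [B1, B2, Function.comp_def]
  refine ⟨key, ?_⟩
  ext j i
  have hcol := congrFun (key i.val i.isLt) j
  -- the `i`-th columns of the stacked matrices are the stacked window vectors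
  have h2 : ∀ z v : ℕ → ℝ, (fun k => stack2
      (Matrix.of fun (j : Fin N) (i : Fin T) => z (i.val + j.val))
      (Matrix.of fun (j : Fin N) (i : Fin T) => v (i.val + j.val)) k i) =
      Sum.elim (fun j : Fin N => z (i.val + j.val)) (fun j : Fin N => v (i.val + j.val)) := by
    intro z v
    funext k
    rcases k with k | k <;> rfl
  have h3 : (fun k => stack3
      (Matrix.of fun (j : Fin N) (i : Fin T) => y (i.val + j.val))
      (Matrix.of fun (j : Fin N) (i : Fin T) => u (i.val + j.val))
      (Matrix.of fun (q : Fin P) (i : Fin T) =>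
        Q (fun j : Fin N => y (i.val + j.val)) (fun j : Fin N => u (i.val + j.val)) q) k i) =
      Zvec Q (fun j : Fin N => y (i.val + j.val)) (fun j : Fin N => u (i.val + j.val)) := by
    funext k
    rcases k with k | k | k <;> rfl
  have hL : stack2 (Matrix.of fun (j : Fin N) (i : Fin T) => y (i.val + 1 + j.val))
      (Matrix.of fun (j : Fin N) (i : Fin T) => u (i.val + 1 + j.val)) j i =
      Sum.elim (fun j : Fin N => y (i.val + 1 + j.val))
        (fun j : Fin N => u (i.val + 1 + j.val)) j := by
    rcases j with j | j <;> rfl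
  rw [hL, hcol]
  simp only [Matrix.add_apply, Pi.add_apply, Pi.smul_apply, smul_eq_mul, Matrix.vecMulVec_apply,
    Matrix.mul_apply_eq_vecMul, Matrix.vecMul, Matrix.mulVec, h3, h2, mul_comm]
end
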